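/- Let G be a finite simple graph on vertex set V, let A ∈ S(G), and let x be a vector with A x = 0. Suppose B ⊆ V, x vanishes on every vertex of B, v ∈ B, and w is the unique neighbor of v in G not belonging to B. Then x_w = 0. -/

import Mathlib

theorem eq_zero_of_finsum_mul_eq_zero {ι R : Type*} [NonUnitalNonAssocSemiring R]
    [NoZeroDivisors R] {a x : ι → R} {j : ι} (hsum : ∑ᶠ k, a k * x k = 0) (haj : a j ≠ 0)
    (hzero : ∀ k ≠ j, a k = 0 ∨ x k = 0) : x j = 0 := by
  have hterm : a j * x j = 0 := by
    rwa [finsum_eq_single _ j fun k hk => mul_eq_zero.mpr (hzero k hk)] at hsum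
  exact (mul_eq_zero.mp hterm).resolve_left haj

/- `V` may be infinite: all terms of the sum except the one at `w` vanish, so `∑ᶠ` does not take
its junk value. -/
theorem color_change_rule_null_vector_general {V R : Type*} [NonUnitalNonAssocSemiring R]
    [NoZeroDivisors R] (G : Digraph V) (A : Matrix V V R) (x : V → R) (B : Set V)
    (hB : ∀ i ∈ B, x i = 0) (v : V) (hv : v ∈ B)
    (hpat : ∀ u, v ≠ u → (A v u ≠ 0 ↔ G.Adj v u)) (hx : ∑ᶠ u, A v u * x u = 0)
    (w : V) (hadj : G.Adj v w) (huniq : ∀ u, G.Adj v u → u ∉ B → u = w) :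
    x w = 0 := by
  by_cases hw : w ∈ B
  · exact hB w hw
  have hzero (u : V) (huw : u ≠ w) : A v u = 0 ∨ x u = 0 := by
    by_cases hu : u ∈ B
    · exact Or.inr (hB u hu)
    · have hnadj : ¬ G.Adj v u := fun h => huw (huniq u h hu)
      exact Or.inl (not_not.mp (mt (hpat u (ne_of_mem_of_not_mem hv hu)).mp hnadj))
  have hAvw : A v w ≠ 0 := (hpat w (ne_of_mem_of_not_mem hv hw)).mpr hadj
  exact eq_zero_of_finsum_mul_eq_zero hx hAvw hzero

/-- Color change rule for null vectors: if `A ∈ S(G)`, `A x = 0`, `x` vanishes on `B`,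
`v ∈ B`, and `w` is the unique neighbor of `v` not in `B`, then `x w = 0`. -/
theorem color_change_rule_null_vector
    {V : Type*} [Fintype V] [DecidableEq V] (G : SimpleGraph V)
    (A : Matrix V V ℂ) (hA : A.IsHermitian)
    (hpat : ∀ i j : V, i ≠ j → (A i j ≠ 0 ↔ G.Adj i j))
    (x : V → ℂ) (hx : A.mulVec x = 0)
    (B : Set V) (hB : ∀ i ∈ B, x i = 0)
    (v : V) (hv : v ∈ B) (w : V) (hw : w ∉ B) (hadj : G.Adj v w)
    (huniq : ∀ u : V, G.Adj v u → u ∉ B → u = w) :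
    x w = 0 :=
  color_change_rule_null_vector_general ⟨G.Adj⟩ A x B hB v hv (hpat v)
    ((finsum_eq_sum_of_fintype _).trans (congrFun hx v)) w hadj huniq
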